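/- For every fixed integer k ≥ 1, with high probability the number of edges of O_k equals (o_k + o(1))·n, where o_k = k/2 + (1/4)·Σ_{i=0}^{k−1} binom(2i,i)·2^{−2i}. -/

import Mathlib

open Finset Filter

namespace RGP

/-- Number of edges of the complete graph on `n` vertices. -/
def numEdges (n : ℕ) : ℕ := n * (n - 1) / 2

/-- An edge of the complete graph on `Fin n` (an unordered pair of distinct vertices). -/
abbrev EdgeType (n : ℕ) := {e : Sym2 (Fin n) // ¬ e.IsDiag}

/-- A uniformly random permutation of the edges of `K_n` is modelled by a bijection
`σ` between positions `Fin (numEdges n)` and edges; `σ i` is the edge `e_{i+1}`. -/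
abbrev Ord (n : ℕ) := Fin (numEdges n) ≃ EdgeType n

/-- Degree of a vertex `v` in a set `S` of edges. -/
def deg {n : ℕ} (S : Finset (Sym2 (Fin n))) (v : Fin n) : ℕ :=
  (S.filter (fun e => v ∈ e)).card

/-- The edge set `{e_1, …, e_m}` of `G_{n,m}` in the random graph process `σ`. -/
def procEdges {n : ℕ} (σ : Ord n) (m : ℕ) : Finset (Sym2 (Fin n)) :=
  (Finset.univ.filter (fun i : Fin (numEdges n) => (i : ℕ) < m)).image (fun i => (σ i).1)

/-- The hitting time `τ_k` for minimum degree at least `k`. -/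
noncomputable def tau {n : ℕ} (k : ℕ) (σ : Ord n) : ℕ :=
  sInf {m | ∀ v : Fin n, k ≤ deg (procEdges σ m) v}

open scoped Classical in
/-- The probability of an event under the uniformly random edge ordering. -/
noncomputable def Pr {n : ℕ} (p : Ord n → Prop) : ℝ :=
  ((Finset.univ : Finset (Ord n)).filter p).card / (Fintype.card (Ord n) : ℝ)

/-- A deterministic online strategy: given the sequence of edges revealed so far
(the last entry being the edge just revealed), decide whether to purchase it. -/
abbrev Strategy (n : ℕ) := List (Sym2 (Fin n)) → Bool

/-- The list of the first `i` revealed edges `e_1, …, e_i`. -/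
def prefixList {n : ℕ} (σ : Ord n) (i : ℕ) : List (Sym2 (Fin n)) :=
  (List.range i).filterMap (fun j => if h : j < numEdges n then some (σ ⟨j, h⟩).1 else none)

/-- `buy st σ i` is the edge set of Builder's graph `B_i`: the edges purchased by the
strategy `st` among `e_1, …, e_i`. -/
def buy {n : ℕ} (st : Strategy n) (σ : Ord n) : ℕ → Finset (Sym2 (Fin n))
  | 0 => ∅
  | i + 1 =>
    if h : i < numEdges n then
      if st (prefixList σ (i + 1)) then insert (σ ⟨i, h⟩).1 (buy st σ i)
      else buy st σ i
    else buy st σ i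

end RGP

namespace RGP

open scoped Classical in
/-- The `k`-th nearest neighbour graph `O_k`: the set of edges `e_i` which are among the
first `k` edges of the random graph process incident to at least one of their endpoints. -/
noncomputable def nearestNbr {n : ℕ} (k : ℕ) (σ : Ord n) : Finset (Sym2 (Fin n)) :=
  ((Finset.univ : Finset (Fin (numEdges n))).filter
    (fun i => ∃ v ∈ (σ i).1, deg (procEdges σ ((i : ℕ) + 1)) v ≤ k)).image (fun i => (σ i).1)

/-- The constant `o_k = k/2 + (1/4)·Σ_{i=0}^{k−1} binom(2i,i)·2^{−2i}`. -/
noncomputable def oConst (k : ℕ) : ℝ :=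
  (k : ℝ) / 2 + (1 / 4) * ∑ i ∈ Finset.range k, ((2 * i).choose i : ℝ) * (2 : ℝ) ^ (-(2 * i : ℤ))

open scoped Nat

lemma card_before_eq {T : Type*} [Fintype T] [DecidableEq T] (e : T) (W : Finset T) (he : e ∉ W) :
    #{f : Numbering T | univ.filter (fun x => f x < f e) = W}
      = (#W)! * (Fintype.card T - #W - 1)! := by
  set V := insert e W with hV
  have hVc : #V = #W + 1 := card_insert_of_notMem he
  have hlt : #W < Fintype.card T := by
    have := V.card_le_univ
    omega
  let r : Fin (Fintype.card T) := ⟨#W, hlt⟩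
  have h1 : #(Numbering.prefixed V) = ∑ x ∈ V, #{f ∈ Numbering.prefixed V | f.symm r = x} := by
    apply card_eq_sum_card_fiberwise
    intro f hf
    have hf' := Numbering.mem_prefixed.1 (by simpa using hf)
    simp only [mem_coe]
    rw [hf']
    simp [r, hVc]
  have h2 : ∀ x ∈ V, #{f ∈ Numbering.prefixed V | f.symm r = x}
      = #{f ∈ Numbering.prefixed V | f.symm r = e} := by
    intro x hx
    have hmem : ∀ y, Equiv.swap x e y ∈ V ↔ y ∈ V := by
      intro y
      by_cases h1 : y = x
      · subst h1; simp [hV]; simpa [hV] using hx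
      by_cases h2 : y = e
      · subst h2; simp [hV]; simpa [hV] using hx
      rw [Equiv.swap_apply_of_ne_of_ne h1 h2]
    refine card_bij' (fun f _ => (Equiv.swap x e).trans f) (fun f _ => (Equiv.swap x e).trans f) ?_ ?_ ?_ ?_
    · intro f hf
      simp only [mem_filter, Numbering.mem_prefixed] at hf ⊢
      refine ⟨fun y => ?_, ?_⟩
      · have := hf.1 (Equiv.swap x e y)
        rw [hmem] at this
        simpa using this
      · simp [hf.2]
    · intro f hf
      simp only [mem_filter, Numbering.mem_prefixed] at hf ⊢
      refine ⟨fun y => ?_, ?_⟩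
      · have := hf.1 (Equiv.swap x e y)
        rw [hmem] at this
        simpa using this
      · simp [hf.2]
    · intro f hf
      ext y; simp
    · intro f hf
      ext y; simp
  rw [sum_congr rfl h2, sum_const, Numbering.card_prefixed, hVc, smul_eq_mul,
    Nat.factorial_succ, mul_assoc] at h1
  have h3 := Nat.eq_of_mul_eq_mul_left (Nat.succ_pos _) h1
  rw [Nat.sub_sub, h3]
  congr 1
  ext f
  simp only [mem_filter, Numbering.mem_prefixed, mem_univ, true_and]
  constructor
  · intro h
    have hc : #W = (f e : ℕ) := by
      rw [← h]
      have : #(univ.filter (fun x => f x < f e)) = #(Finset.Iio (f e)) := by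
        refine card_bij (fun x _ => f x) ?_ ?_ ?_
        · intro a ha; simpa using ha
        · intro a _ b _ hab; exact f.injective hab
        · intro b hb; exact ⟨f.symm b, by simpa using hb, by simp⟩
      rw [this]; simp
    constructor
    · intro x
      rw [hVc, hV, mem_insert, ← h]
      simp only [mem_filter, mem_univ, true_and]
      rw [Nat.lt_succ_iff, h, hc, le_iff_lt_or_eq, ← Fin.lt_def, Fin.val_inj, f.injective.eq_iff, or_comm]
    · rw [Equiv.symm_apply_eq]; ext; simp [r, hc]
  · rintro ⟨h, h'⟩
    rw [Equiv.symm_apply_eq] at h'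
    ext x
    simp only [mem_filter, mem_univ, true_and, ← h']
    have hx := h x
    rw [hVc, hV, mem_insert] at hx
    have : (f x < r) ↔ (f x : ℕ) < #W := by simp [r, Fin.lt_def]
    rw [this]
    by_cases hxe : x = e
    · subst hxe
      simp [he, ← h', r]
    · have hne : (f x : ℕ) ≠ #W := by
        intro hh
        apply hxe
        apply f.injective
        rw [← h']; ext; simp [r, hh]
      simp only [hxe, false_or] at hx
      rw [hx]; omega

/-- The unnormalised count of good orderings. -/
def goodCount (k m : ℕ) : ℕ :=
  ∑ i ∈ range k, ∑ j ∈ range k, m.choose i * (m.choose j * ((i + j)! * (2 * m - (i + j))!))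

lemma sum_small_powerset {T : Type*} [DecidableEq T] (A : Finset T) (k : ℕ) (g : ℕ → ℕ) :
    ∑ I ∈ A.powerset with #I < k, g #I = ∑ i ∈ range k, (#A).choose i * g i := by
  rw [sum_filter, sum_powerset_apply_card (fun i => if i < k then g i else 0)]
  simp only [smul_eq_mul, mul_ite, mul_zero]
  rw [← sum_filter]
  apply sum_subset_zero_on_sdiff
  · intro i; simp
  · intro i hi
    simp at hi
    rw [Nat.choose_eq_zero_of_lt, zero_mul]
    by_contra hh
    have := hi.2
    omega
  · intros; rfl

lemma card_good {T : Type*} [Fintype T] [DecidableEq T] (k m : ℕ) (e : T) (A B : Finset T)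
    (hA : #A = m) (hB : #B = m) (hAB : Disjoint A B) (heA : e ∉ A) (heB : e ∉ B)
    (hu : ∀ x, x = e ∨ x ∈ A ∨ x ∈ B) :
    #{f : Numbering T | #{x ∈ A | f x < f e} < k ∧ #{x ∈ B | f x < f e} < k} = goodCount k m := by
  have hcard : Fintype.card T = 2 * m + 1 := by
    have : (univ : Finset T) = insert e (A ∪ B) := by
      ext x; simpa using hu x
    rw [← card_univ, this, card_insert_of_notMem (by simp [heA, heB]), card_union_of_disjoint hAB]
    omega
  rw [card_eq_sum_card_fiberwise (f := fun f : Numbering T =>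
    (({x ∈ A | f x < f e} : Finset T), ({x ∈ B | f x < f e} : Finset T)))
    (t := (A.powerset.filter (fun I => #I < k)) ×ˢ (B.powerset.filter (fun I => #I < k)))]
  · rw [sum_product]
    have : ∀ I ∈ A.powerset.filter (fun I => #I < k), ∀ J ∈ B.powerset.filter (fun I => #I < k),
      #{f ∈ ({f : Numbering T | #{x ∈ A | f x < f e} < k ∧ #{x ∈ B | f x < f e} < k} : Finset _) |
        (({x ∈ A | f x < f e} : Finset T), ({x ∈ B | f x < f e} : Finset T)) = (I, J)}
        = (#I + #J)! * (2 * m - (#I + #J))! := by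
      intro I hI J hJ
      simp only [mem_filter, mem_powerset] at hI hJ
      have hd : Disjoint I J := disjoint_of_subset_left hI.1 (disjoint_of_subset_right hJ.1 hAB)
      have h := card_before_eq e (I ∪ J) (by
        simp only [mem_union, not_or]; exact ⟨fun h => heA (hI.1 h), fun h => heB (hJ.1 h)⟩)
      rw [card_union_of_disjoint hd] at h
      rw [show 2 * m - (#I + #J) = Fintype.card T - (#I + #J) - 1 by omega, ← h]
      congr 1
      ext f
      simp only [mem_filter, mem_univ, true_and, Prod.mk.injEq]
      constructor
      · rintro ⟨_, h1, h2⟩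
        ext x
        rw [← h1, ← h2]
        simp only [mem_filter, mem_univ, true_and, mem_union]
        rcases hu x with rfl | h | h
        · simp
        · simp [h]
        · simp [h]
      · intro h
        have h1 : ({x ∈ A | f x < f e} : Finset T) = I := by
          ext x
          have hx : f x < f e ↔ x ∈ I ∨ x ∈ J := by
            rw [← mem_union, ← h]; simp
          simp only [mem_filter, hx]
          constructor
          · rintro ⟨ha, hb | hb⟩
            · exact hb
            · exact absurd (hJ.1 hb) (disjoint_left.1 hAB ha)
          · intro hb; exact ⟨hI.1 hb, Or.inl hb⟩
        have h2 : ({x ∈ B | f x < f e} : Finset T) = J := by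
          ext x
          have hx : f x < f e ↔ x ∈ I ∨ x ∈ J := by
            rw [← mem_union, ← h]; simp
          simp only [mem_filter, hx]
          constructor
          · rintro ⟨ha, hb | hb⟩
            · exact absurd ha (disjoint_left.1 hAB (hI.1 hb))
            · exact hb
          · intro hb; exact ⟨hJ.1 hb, Or.inr hb⟩
        rw [h1, h2]
        exact ⟨⟨hI.2, hJ.2⟩, rfl, rfl⟩
    rw [sum_congr rfl (fun I hI => sum_congr rfl (this I hI))]
    have h2 : ∀ I : Finset T, ∑ J ∈ B.powerset with #J < k, (#I + #J)! * (2 * m - (#I + #J))!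
       = ∑ j ∈ range k, m.choose j * ((#I + j)! * (2 * m - (#I + j))!) := by
      intro I
      rw [sum_small_powerset B k (fun j => (#I + j)! * (2 * m - (#I + j))!), hB]
    rw [sum_congr rfl (fun I _ => h2 I),
      sum_small_powerset A k (fun i => ∑ j ∈ range k, m.choose j * ((i + j)! * (2 * m - (i + j))!)), hA]
    simp only [goodCount, mul_sum]
  · intro f hf
    simp at hf ⊢
    exact hf

/-- The good event. -/
def Good {α : Type*} (k : ℕ) (e : α) (A B : Finset α) (g : α → ℕ) : Prop :=
  #{x ∈ A | g x < g e} < k ∧ #{x ∈ B | g x < g e} < k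

instance {α : Type*} (k : ℕ) (e : α) (A B : Finset α) (g : α → ℕ) : Decidable (Good k e A B g) :=
  inferInstanceAs (Decidable (_ ∧ _))

lemma exists_numbering {T : Type*} [Fintype T] (g : T → ℕ) (hg : Function.Injective g) :
    ∃ q : Numbering T, ∀ x y, q x < q y ↔ g x < g y := by
  let _ : LinearOrder T := LinearOrder.lift' g hg
  refine ⟨(Fintype.orderIsoFinOfCardEq T rfl).symm.toEquiv, fun x y => ?_⟩
  exact (Fintype.orderIsoFinOfCardEq T rfl).symm.lt_iff_lt

lemma perm_count {α : Type*} [DecidableEq α] (k m : ℕ) (e : α) (A B : Finset α)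
    (hA : #A = m) (hB : #B = m) (hAB : Disjoint A B) (heA : e ∉ A) (heB : e ∉ B)
    (g : α → ℕ) (hg : Function.Injective g) :
    #{π : Equiv.Perm {x // x ∈ insert e (A ∪ B)} |
      Good k e A B (fun x => g (Equiv.Perm.ofSubtype π x))} = goodCount k m := by
  set S := insert e (A ∪ B) with hS
  have heS : e ∈ S := by simp [hS]
  have hAS : A ⊆ S := fun x hx => by simp [hS, hx]
  have hBS : B ⊆ S := fun x hx => by simp [hS, hx]
  obtain ⟨q, hq⟩ := exists_numbering (fun x : {x // x ∈ S} => g x)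
    (fun x y h => Subtype.ext (hg h))
  rw [← card_good k m (⟨e, heS⟩ : {x // x ∈ S}) (A.subtype (· ∈ S)) (B.subtype (· ∈ S))
    (by rw [card_subtype, filter_true_of_mem hAS, hA])
    (by rw [card_subtype, filter_true_of_mem hBS, hB])
    (by rw [disjoint_left]; intro x hx hx'; simp at hx hx'; exact disjoint_left.1 hAB hx hx')
    (by simpa using heA) (by simpa using heB)
    (by rintro ⟨x, hx⟩; simpa [hS] using hx)]
  have key : ∀ (C : Finset α), C ⊆ S → ∀ π : Equiv.Perm {x // x ∈ S},
      #{x ∈ C | g (Equiv.Perm.ofSubtype π x) < g (Equiv.Perm.ofSubtype π e)}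
      = #{x ∈ C.subtype (· ∈ S) | (π.trans q) x < (π.trans q) ⟨e, heS⟩} := by
    intro C hC π
    symm
    refine card_bij (fun x _ => x.1) ?_ ?_ ?_
    · rintro ⟨x, hx⟩ hx'
      simp only [mem_filter, mem_subtype, Equiv.trans_apply, hq] at hx' ⊢
      refine ⟨hx'.1, ?_⟩
      rw [Equiv.Perm.ofSubtype_apply_of_mem π hx, Equiv.Perm.ofSubtype_apply_of_mem π heS]
      exact hx'.2
    · intro x _ y _ h; exact Subtype.ext h
    · intro x hx
      simp only [mem_filter] at hx
      obtain ⟨hx1, hx2⟩ := hx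
      refine ⟨⟨x, hC hx1⟩, ?_, rfl⟩
      simp only [mem_filter, mem_subtype, Equiv.trans_apply, hq]
      refine ⟨hx1, ?_⟩
      rw [Equiv.Perm.ofSubtype_apply_of_mem π (hC hx1), Equiv.Perm.ofSubtype_apply_of_mem π heS] at hx2
      exact hx2
  refine card_bij' (fun π _ => π.trans q) (fun f _ => f.trans q.symm) ?_ ?_ ?_ ?_
  · intro π hπ
    simp only [mem_filter, mem_univ, true_and, Good] at hπ ⊢
    rw [← key A hAS, ← key B hBS]
    exact hπ
  · intro f hf
    simp only [mem_filter, mem_univ, true_and, Good] at hf ⊢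
    rw [key A hAS, key B hBS]
    have : (f.trans q.symm).trans q = f := by ext; simp
    rw [this]
    exact hf
  · intro π _; ext; simp
  · intro f _; ext; simp

lemma indep {α : Type*} [Fintype α] [DecidableEq α] {N : ℕ} (k m : ℕ) (e : α) (A B : Finset α)
    (hA : #A = m) (hB : #B = m) (hAB : Disjoint A B) (heA : e ∉ A) (heB : e ∉ B)
    (R : (Fin N ≃ α) → Prop) [DecidablePred R]
    (hR : ∀ (σ : Fin N ≃ α) (π : Equiv.Perm {x // x ∈ insert e (A ∪ B)}),
      R (σ.trans (Equiv.Perm.ofSubtype π).symm) ↔ R σ) :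
    #{σ : Fin N ≃ α | Good k e A B (fun x => (σ.symm x : ℕ)) ∧ R σ} * (2 * m + 1)!
      = goodCount k m * #{σ : Fin N ≃ α | R σ} := by
  have hc : Fintype.card (Equiv.Perm {x // x ∈ insert e (A ∪ B)}) = (2 * m + 1)! := by
    rw [Fintype.card_perm, Fintype.card_coe, card_insert_of_notMem (by simp [heA, heB]),
      card_union_of_disjoint hAB, hA, hB, two_mul]
  have h1 : ∀ π : Equiv.Perm {x // x ∈ insert e (A ∪ B)},
      #{σ : Fin N ≃ α | Good k e A B (fun x => (σ.symm x : ℕ)) ∧ R σ}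
      = #{σ ∈ ({σ | R σ} : Finset (Fin N ≃ α)) |
          Good k e A B (fun x => (σ.symm (Equiv.Perm.ofSubtype π x) : ℕ))} := by
    intro π
    symm
    refine card_bij' (fun σ _ => σ.trans (Equiv.Perm.ofSubtype π).symm)
      (fun σ _ => σ.trans (Equiv.Perm.ofSubtype π)) ?_ ?_ ?_ ?_
    · intro σ hσ
      simp only [mem_filter, mem_univ, true_and] at hσ ⊢
      rw [hR]
      exact ⟨hσ.2, hσ.1⟩
    · intro σ hσ
      simp only [mem_filter, mem_univ, true_and] at hσ ⊢
      rw [← hR _ π]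
      have : (σ.trans (Equiv.Perm.ofSubtype π)).trans (Equiv.Perm.ofSubtype π).symm = σ := by
        ext; simp
      rw [this]
      refine ⟨hσ.2, ?_⟩
      simpa using hσ.1
    · intro σ _; ext; simp
    · intro σ _; ext; simp
  calc #{σ : Fin N ≃ α | Good k e A B (fun x => (σ.symm x : ℕ)) ∧ R σ} * (2 * m + 1)!
      = ∑ π : Equiv.Perm {x // x ∈ insert e (A ∪ B)},
        #{σ : Fin N ≃ α | Good k e A B (fun x => (σ.symm x : ℕ)) ∧ R σ} := by
        rw [sum_const, card_univ, hc, smul_eq_mul, mul_comm]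
    _ = ∑ π : Equiv.Perm {x // x ∈ insert e (A ∪ B)},
        #{σ ∈ ({σ | R σ} : Finset (Fin N ≃ α)) |
          Good k e A B (fun x => (σ.symm (Equiv.Perm.ofSubtype π x) : ℕ))} :=
        sum_congr rfl (fun π _ => h1 π)
    _ = ∑ σ ∈ ({σ | R σ} : Finset (Fin N ≃ α)),
        #{π : Equiv.Perm {x // x ∈ insert e (A ∪ B)} |
          Good k e A B (fun x => (σ.symm (Equiv.Perm.ofSubtype π x) : ℕ))} := by
        simp only [card_filter]
        rw [sum_comm]
    _ = _ := by
        rw [sum_congr rfl (fun σ _ => perm_count k m e A B hA hB hAB heA heB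
          (fun x => (σ.symm x : ℕ)) (fun x y h => σ.symm.injective (Fin.ext h)))]
        rw [sum_const, smul_eq_mul, mul_comm]

/-- Probability of the good event for two disjoint stars of size `m`. -/
noncomputable def prGood (k m : ℕ) : ℝ := (goodCount k m : ℝ) / ((2 * m + 1)! : ℝ)

/-- Twice the limit of `m * prGood k m`. -/
noncomputable def sConst (k : ℕ) : ℝ :=
  ∑ i ∈ range k, ∑ j ∈ range k, ((i + j).choose i : ℝ) * (1 / 2) ^ (i + j)

lemma matchbox (k : ℕ) :
    ∑ i ∈ range (k + 1), ((k + i).choose i : ℝ) * (1 / 2) ^ i = 2 ^ k := by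
  induction k with
  | zero => simp
  | succ k ih =>
    have h1 : ∑ i ∈ range (k + 2), ((k + 1 + i).choose i : ℝ) * (1 / 2) ^ i
      = (∑ i ∈ range (k + 2), ((k + i).choose i : ℝ) * (1 / 2) ^ i)
        + (1 / 2) * ∑ i ∈ range (k + 1), ((k + 1 + i).choose i : ℝ) * (1 / 2) ^ i := by
      rw [sum_range_succ' _ (k + 1), sum_range_succ' _ (k + 1), mul_sum]
      have : ∀ i ∈ range (k + 1), ((k + 1 + (i + 1)).choose (i + 1) : ℝ) * (1 / 2) ^ (i + 1)
        = ((k + (i + 1)).choose (i + 1) : ℝ) * (1 / 2) ^ (i + 1)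
          + (1 / 2) * (((k + 1 + i).choose i : ℝ) * (1 / 2) ^ i) := by
        intro i _
        have : (k + 1 + (i + 1)).choose (i + 1) = (k + 1 + i).choose i + (k + (i + 1)).choose (i + 1) := by
          rw [show k + 1 + (i + 1) = (k + 1 + i) + 1 by ring, Nat.choose_succ_succ,
            show k + (i + 1) = k + 1 + i by ring]
        rw [this]; push_cast; ring
      rw [sum_congr rfl this, sum_add_distrib]
      simp
      ring
    have h2 := sum_range_succ (fun i => ((k + i).choose i : ℝ) * (1 / 2) ^ i) (k + 1)
    have h3 := sum_range_succ (fun i => ((k + 1 + i).choose i : ℝ) * (1 / 2) ^ i) (k + 1)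
    have h4 : ((k + 1 + (k + 1)).choose (k + 1) : ℝ) = 2 * ((k + (k + 1)).choose (k + 1) : ℝ) := by
      have : (k + 1 + (k + 1)).choose (k + 1) = 2 * (k + (k + 1)).choose (k + 1) := by
        rw [show k + 1 + (k + 1) = (k + (k + 1)) + 1 by ring, Nat.choose_succ_succ, two_mul]
        congr 1
        exact Nat.choose_symm_of_eq_add rfl
      exact_mod_cast this
    rw [ih] at h2
    simp only [show k + 1 + 1 = k + 2 from rfl] at h2 h3
    rw [h4] at h3
    rw [show k + 1 + 1 = k + 2 from rfl, pow_succ]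
    linarith

lemma sConst_eq (k : ℕ) : sConst k / 4 = k - oConst k := by
  have h : sConst k = 2 * k - ∑ i ∈ range k, ((2 * i).choose i : ℝ) * (2 : ℝ) ^ (-(2 * i : ℤ)) := by
    induction k with
    | zero => simp [sConst]
    | succ k ih =>
      have h1 : sConst (k + 1) = sConst k
          + ∑ i ∈ range k, ((i + k).choose i : ℝ) * (1 / 2) ^ (i + k)
          + ∑ j ∈ range k, ((k + j).choose k : ℝ) * (1 / 2) ^ (k + j)
          + ((k + k).choose k : ℝ) * (1 / 2) ^ (k + k) := by
        unfold sConst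
        rw [sum_range_succ]
        simp only [sum_range_succ _ k]
        rw [sum_add_distrib]
        ring
      have h2 : ∀ j ∈ range k, ((k + j).choose k : ℝ) * (1 / 2) ^ (k + j)
          = (1 / 2) ^ k * (((k + j).choose j : ℝ) * (1 / 2) ^ j) := by
        intro j _
        rw [Nat.choose_symm_of_eq_add (show k + j = k + j from rfl), pow_add]; ring
      have h3 : ∀ i ∈ range k, ((i + k).choose i : ℝ) * (1 / 2) ^ (i + k)
          = (1 / 2) ^ k * (((k + i).choose i : ℝ) * (1 / 2) ^ i) := by
        intro j _
        rw [add_comm j k, pow_add]; ring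
      rw [sum_congr rfl h2, sum_congr rfl h3, ← mul_sum] at h1
      have h4 := matchbox k
      rw [sum_range_succ] at h4
      have h5 : ((1 : ℝ) / 2) ^ k * 2 ^ k = 1 := by rw [← mul_pow]; norm_num
      have h6 : (2 : ℝ) ^ (-(2 * k : ℤ)) = (1 / 2) ^ (k + k) := by
        rw [zpow_neg, one_div, inv_pow, ← two_mul]; norm_cast
      rw [sum_range_succ, h6, h1, ih, two_mul k]
      have h7 : ∑ i ∈ range k, ((k + i).choose i : ℝ) * (1 / 2) ^ i
        = 2 ^ k - ((k + k).choose k : ℝ) * (1 / 2) ^ k := by linarith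
      rw [h7, pow_add]
      push_cast
      linear_combination 2 * h5
  rw [h, oConst]
  ring

lemma tendsto_term (i j : ℕ) :
    Tendsto (fun m : ℕ => (m : ℝ) * ((m.choose i * (m.choose j * ((i + j)! * (2 * m - (i + j))!)) : ℕ) : ℝ)
      / ((2 * m + 1)! : ℝ)) atTop (nhds (((i + j).choose i : ℝ) * (1 / 2) ^ (i + j) / 2)) := by
  have hd : ∀ r : ℕ, Tendsto (fun m : ℕ => (m.descFactorial r : ℝ) / (m : ℝ) ^ r) atTop (nhds 1) := by
    intro r
    have h := isEquivalent_descFactorial r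
    rw [Asymptotics.isEquivalent_iff_tendsto_one] at h
    · exact h
    · filter_upwards [eventually_gt_atTop 0] with m hm
      positivity
  have h2 : Tendsto (fun m : ℕ => 2 * m) atTop atTop :=
    tendsto_atTop_mono (fun m => by simp; omega) tendsto_id
  have hd2 := (hd (i + j)).comp h2
  have hm : Tendsto (fun m : ℕ => (m : ℝ) / (2 * m + 1)) atTop (nhds (1 / 2)) := by
    have h : Tendsto (fun m : ℕ => (1 : ℝ) / 2 - (1 / 2) * (1 / ((2 * m : ℕ) + 1 : ℝ))) atTop
        (nhds (1 / 2 - (1 / 2) * 0)) :=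
      (tendsto_const_nhds).sub ((tendsto_one_div_add_atTop_nhds_zero_nat.comp h2).const_mul _)
    simp only [mul_zero, sub_zero] at h
    refine h.congr (fun m => ?_)
    push_cast
    have : (2 * (m : ℝ) + 1) ≠ 0 := by positivity
    field_simp
    ring
  have hall := ((((hd i).mul (hd j)).div hd2 one_ne_zero).mul hm).const_mul
    (((i + j).choose i : ℝ) * (1 / 2) ^ (i + j))
  have e1 : ((i + j).choose i : ℝ) * (1 / 2) ^ (i + j) * ((1 : ℝ) * 1 / 1 * (1 / 2))
     = ((i + j).choose i : ℝ) * (1 / 2) ^ (i + j) / 2 := by ring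
  rw [e1] at hall
  refine hall.congr' ?_
  filter_upwards [eventually_gt_atTop (i + j)] with m hm
  have hm0 : (m : ℝ) ≠ 0 := by
    have : 0 < m := by omega
    positivity
  have f1 : ((2 * m).descFactorial (i + j) : ℝ) * ((2 * m - (i + j))! : ℝ) = ((2 * m)! : ℝ) := by
    have := Nat.factorial_mul_descFactorial (show i + j ≤ 2 * m by omega)
    rw [mul_comm]; exact_mod_cast this
  have f2 : ∀ r, (m.descFactorial r : ℝ) = (r ! : ℝ) * (m.choose r : ℝ) := by
    intro r; exact_mod_cast Nat.descFactorial_eq_factorial_mul_choose m r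
  have f3 : ((i + j)! : ℝ) = ((i + j).choose i : ℝ) * (i ! : ℝ) * (j ! : ℝ) := by
    have := Nat.add_choose_mul_factorial_mul_factorial i j
    rw [Nat.choose_symm_of_eq_add (show i + j = i + j from rfl)]
    exact_mod_cast this.symm
  have f4 : ((2 * m + 1)! : ℝ) = (2 * m + 1) * ((2 * m)! : ℝ) := by
    rw [Nat.factorial_succ]; push_cast; ring
  have n1 : ((2 * m).descFactorial (i + j) : ℝ) ≠ 0 := by
    have : 0 < (2 * m).descFactorial (i + j) := Nat.descFactorial_pos.2 (by omega)
    positivity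
  have n2 : ((2 * m - (i + j))! : ℝ) ≠ 0 := by positivity
  have n3 : (2 * (m : ℝ) + 1) ≠ 0 := by positivity
  simp only [Pi.div_apply, Function.comp_apply]
  rw [f4, ← f1, f2 i, f2 j]
  push_cast
  rw [f3, mul_pow, pow_add, pow_add, one_div, inv_pow, inv_pow]
  field_simp
  ring

lemma tendsto_prGood (k : ℕ) :
    Tendsto (fun m : ℕ => (m : ℝ) * prGood k m) atTop (nhds (sConst k / 2)) := by
  have : ∀ m : ℕ, (m : ℝ) * prGood k m = ∑ i ∈ range k, ∑ j ∈ range k,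
      (m : ℝ) * ((m.choose i * (m.choose j * ((i + j)! * (2 * m - (i + j))!)) : ℕ) : ℝ)
      / ((2 * m + 1)! : ℝ) := by
    intro m
    unfold prGood goodCount
    simp only [Nat.cast_sum, mul_sum, sum_div, mul_div_assoc]
  simp only [this]
  unfold sConst
  simp only [sum_div]
  exact tendsto_finsetSum _ (fun i _ => tendsto_finsetSum _ (fun j _ => tendsto_term i j))

/-- For `c` a fixed shift. -/
lemma tendsto_numEdges_prGood (k c : ℕ) :
    Tendsto (fun n : ℕ => ((n : ℝ) * (n - 1) / 2) * prGood k (n - c) / n) atTop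
      (nhds (sConst k / 4)) := by
  have h1 : Tendsto (fun n : ℕ => ((n - c : ℕ) : ℝ) * prGood k (n - c)) atTop
    (nhds (sConst k / 2)) := (tendsto_prGood k).comp (tendsto_sub_atTop_nat c)
  have h2 : Tendsto (fun n : ℕ => ((n : ℝ) - 1) / ((n - c : ℕ) : ℝ)) atTop (nhds 1) := by
    have h3 : Tendsto (fun n : ℕ => 1 + ((c : ℝ) - 1) / ((n - c : ℕ) : ℝ)) atTop (nhds (1 + 0)) :=
      (tendsto_const_nhds).add ((tendsto_const_div_atTop_nhds_zero_nat _).comp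
        (tendsto_sub_atTop_nat c))
    rw [add_zero] at h3
    refine h3.congr' ?_
    filter_upwards [eventually_gt_atTop c] with n hn
    rw [Nat.cast_sub hn.le]
    have : (n : ℝ) - c ≠ 0 := by
      have : (c : ℝ) < n := by exact_mod_cast hn
      linarith
    field_simp
    ring
  have h := (h2.mul h1).div_const 2
  rw [show 1 * (sConst k / 2) / 2 = sConst k / 4 by ring] at h
  refine h.congr' ?_
  filter_upwards [eventually_gt_atTop c] with n hn
  have : ((n - c : ℕ) : ℝ) ≠ 0 := by
    have : 0 < n - c := by omega
    positivity
  have : (n : ℝ) ≠ 0 := by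
    have : 0 < n := by omega
    positivity
  field_simp

lemma card_rank_lt {α : Type*} [DecidableEq α] (T : Finset α) (g : α → ℕ)
    (hg : Function.Injective g) (k : ℕ) :
    #{x ∈ T | #{y ∈ T | g y < g x} < k} = min k #T := by
  set r : α → ℕ := fun x => #{y ∈ T | g y < g x} with hr
  have hmono : ∀ x ∈ T, ∀ y ∈ T, g x < g y → r x < r y := by
    intro x hx y hy hxy
    apply card_lt_card
    rw [Finset.ssubset_iff_of_subset]
    · exact ⟨x, by simp [hx, hxy], by simp⟩
    · intro z hz
      simp only [mem_filter] at hz ⊢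
      exact ⟨hz.1, hz.2.trans hxy⟩
  have hinj : Set.InjOn r T := by
    intro x hx y hy hxy
    rcases lt_trichotomy (g x) (g y) with h | h | h
    · have := hmono x hx y hy h; omega
    · exact hg h
    · have := hmono y hy x hx h; omega
  have him : T.image r = range #T := by
    apply eq_of_subset_of_card_le
    · intro z hz
      simp only [mem_image] at hz
      obtain ⟨x, hx, rfl⟩ := hz
      rw [mem_range]
      apply card_lt_card
      rw [Finset.ssubset_iff_of_subset (filter_subset _ _)]
      exact ⟨x, hx, by simp⟩
    · rw [card_image_of_injOn hinj, card_range]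
  have : #{x ∈ T | r x < k} = #{z ∈ T.image r | z < k} := by
    rw [filter_image, card_image_of_injOn]
    exact hinj.mono (by intro x hx; simp at hx; exact hx.1)
  change #{x ∈ T | r x < k} = _
  rw [this, him]
  have : (range #T).filter (fun z => z < k) = range (min k #T) := by
    ext z; simp; tauto
  rw [this, card_range]

/-- Edges at `v`. -/
def star {n : ℕ} (v : Fin n) : Finset (EdgeType n) := {f | v ∈ f.1}

/-- Edges `{u,y}` with `y ∉ F`. -/
def starOff {n : ℕ} (u : Fin n) (F : Finset (Fin n)) : Finset (EdgeType n) :=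
  {f | u ∈ f.1 ∧ ∀ y ∈ F, y ≠ u → y ∉ f.1}

lemma card_starOff {n : ℕ} (u : Fin n) (F : Finset (Fin n)) (hu : u ∈ F) :
    #(starOff u F) = n - #F := by
  have : #(starOff u F) = #(Fᶜ) := by
    symm
    refine card_bij (fun y hy => (⟨s(u, y), by
      rw [Sym2.mk_isDiag_iff]; rintro rfl; simp [hu] at hy⟩ : EdgeType n)) ?_ ?_ ?_
    · intro y hy
      simp only [starOff, mem_filter, mem_univ, true_and, Sym2.mem_iff, true_or]
      rintro z hz hzu (h | h)
      · exact hzu h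
      · subst h; simp [hz] at hy
    · intro y hy z hz h
      simp only [Subtype.mk.injEq] at h
      exact Sym2.congr_right.1 h
    · rintro ⟨f, hf⟩ hf'
      simp only [starOff, mem_filter, mem_univ, true_and] at hf'
      obtain ⟨y, rfl⟩ := hf'.1
      have hy : y ≠ u := by
        rintro rfl
        simp at hf
      refine ⟨y, ?_, rfl⟩
      rw [mem_compl]
      intro hyF
      exact hf'.2 y hyF hy (by simp)
  rw [this, card_compl, Fintype.card_fin]

lemma star_eq {n : ℕ} (v : Fin n) : star v = starOff v {v} := by
  ext f; simp [star, starOff]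

lemma card_star {n : ℕ} (v : Fin n) : #(star v) = n - 1 := by
  rw [star_eq, card_starOff v {v} (by simp), card_singleton]

lemma mem_star {n : ℕ} {v : Fin n} {f : EdgeType n} : f ∈ star v ↔ v ∈ f.1 := by
  simp [star]

/-- Position. -/
def pos {n : ℕ} (σ : Ord n) (e : EdgeType n) : ℕ := (σ.symm e : ℕ)

lemma pos_injective {n : ℕ} (σ : Ord n) : Function.Injective (pos σ) :=
  fun _ _ h => σ.symm.injective (Fin.ext h)

/-- number of edges at `v` before `e`. -/
def rk {n : ℕ} (σ : Ord n) (v : Fin n) (e : EdgeType n) : ℕ := #{f ∈ star v | pos σ f < pos σ e}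

/-- `e` is among the first `k` edges at both endpoints. -/
def Both {n : ℕ} (k : ℕ) (σ : Ord n) (e : EdgeType n) : Prop := ∀ v ∈ e.1, rk σ v e < k

open scoped Classical in
/-- Number of edges which are among the first `k` at both endpoints. -/
noncomputable def yCount {n : ℕ} (k : ℕ) (σ : Ord n) : ℕ := #{e : EdgeType n | Both k σ e}

lemma deg_eq {n : ℕ} (σ : Ord n) (i : Fin (numEdges n)) (v : Fin n) (hv : v ∈ (σ i).1) :
    deg (procEdges σ ((i : ℕ) + 1)) v = rk σ v (σ i) + 1 := by
  have h1 : deg (procEdges σ ((i : ℕ) + 1)) v = #{f ∈ star v | pos σ f < (i : ℕ) + 1} := by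
    unfold deg procEdges
    symm
    refine card_bij (fun f _ => f.1) ?_ ?_ ?_
    · intro f hf
      simp only [mem_filter, mem_star, mem_univ, true_and, mem_image] at hf ⊢
      exact ⟨⟨σ.symm f, hf.2, by simp⟩, hf.1⟩
    · intro a _ b _ h; exact Subtype.ext h
    · intro f hf
      simp only [mem_filter, mem_star, mem_univ, true_and, mem_image] at hf ⊢
      obtain ⟨⟨j, hj, rfl⟩, hv⟩ := hf
      exact ⟨σ j, ⟨hv, by simpa [pos] using hj⟩, rfl⟩
  have h2 : ({f ∈ star v | pos σ f < (i : ℕ) + 1} : Finset (EdgeType n))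
      = insert (σ i) {f ∈ star v | pos σ f < pos σ (σ i)} := by
    ext f
    have hpi : pos σ (σ i) = i := by simp [pos]
    simp only [mem_filter, mem_insert, hpi]
    constructor
    · rintro ⟨h, h'⟩
      rcases Nat.lt_succ_iff_lt_or_eq.1 h' with h' | h'
      · exact Or.inr ⟨h, h'⟩
      · left
        apply pos_injective σ
        rw [h', hpi]
    · rintro (rfl | h)
      · exact ⟨by simpa [star] using hv, by rw [hpi]; omega⟩
      · exact ⟨h.1, by omega⟩
  rw [h1, h2, card_insert_of_notMem (by simp)]
  rfl

open scoped Classical in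
lemma card_nearestNbr {n : ℕ} (k : ℕ) (σ : Ord n) :
    #(nearestNbr k σ) = #{e : EdgeType n | ∃ v ∈ e.1, rk σ v e < k} := by
  unfold nearestNbr
  rw [card_image_of_injective _ (fun a b h => σ.injective (Subtype.ext h))]
  refine card_bij (fun i _ => σ i) ?_ (fun a _ b _ h => σ.injective h) ?_
  · intro i hi
    simp only [mem_filter, mem_univ, true_and] at hi ⊢
    obtain ⟨v, hv, h⟩ := hi
    rw [deg_eq σ i v hv] at h
    exact ⟨v, hv, h⟩
  · intro e he
    simp only [mem_filter, mem_univ, true_and] at he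
    obtain ⟨v, hv, h⟩ := he
    refine ⟨σ.symm e, ?_, by simp⟩
    simp only [mem_filter, mem_univ, true_and]
    refine ⟨v, by simpa using hv, ?_⟩
    rw [deg_eq σ _ v (by simpa using hv)]
    simpa using h

lemma card_rk_lt {n : ℕ} (k : ℕ) (σ : Ord n) (v : Fin n) :
    #{e ∈ star v | rk σ v e < k} = min k (n - 1) := by
  rw [← card_star v]
  exact card_rank_lt (star v) (pos σ) (pos_injective σ) k

lemma nearestNbr_add_yCount {n : ℕ} (k : ℕ) (hkn : k < n) (σ : Ord n) :
    #(nearestNbr k σ) + yCount k σ = k * n := by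
  have h1 : ∑ v : Fin n, #{e ∈ star v | rk σ v e < k} = k * n := by
    simp only [card_rk_lt]
    rw [sum_const, card_univ, Fintype.card_fin, min_eq_left (by omega), smul_eq_mul, mul_comm]
  rw [← h1, card_nearestNbr, yCount, card_filter, card_filter, ← sum_add_distrib]
  have h2 : ∀ v : Fin n, #{e ∈ star v | rk σ v e < k}
      = ∑ e : EdgeType n, if v ∈ e.1 ∧ rk σ v e < k then 1 else 0 := by
    intro v
    rw [← card_filter, star, filter_filter]
  simp only [h2]
  rw [sum_comm]
  refine sum_congr rfl (fun e _ => ?_)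
  obtain ⟨e, he⟩ := e
  induction e with
  | h u v =>
    have huv : u ≠ v := by simpa using he
    have h3 : ∀ x : Fin n, (if x ∈ s(u, v) ∧ rk σ x ⟨s(u, v), he⟩ < k then 1 else 0)
      = (if x = u then (if rk σ u ⟨s(u, v), he⟩ < k then 1 else 0) else 0)
        + (if x = v then (if rk σ v ⟨s(u, v), he⟩ < k then 1 else 0) else 0) := by
      intro x
      by_cases hxu : x = u
      · subst hxu; simp [huv]
      · by_cases hxv : x = v
        · subst hxv; simp [hxu]
        · simp [hxu, hxv]
    simp only [h3, sum_add_distrib, sum_ite_eq', mem_univ, if_true]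
    simp only [Both, Sym2.mem_iff, exists_eq_or_imp, exists_eq_left,
      forall_eq_or_imp, forall_eq]
    by_cases ha : rk σ u ⟨s(u, v), he⟩ < k <;> by_cases hb : rk σ v ⟨s(u, v), he⟩ < k <;>
      simp [ha, hb]

lemma not_mem_starOff {n : ℕ} {u v : Fin n} {F : Finset (Fin n)} (hv : v ∈ F) (huv : v ≠ u)
    {f : EdgeType n} (hvf : v ∈ f.1) : f ∉ starOff u F := by
  simp only [starOff, mem_filter, mem_univ, true_and, not_and]
  intro _ h
  exact h v hv huv hvf

lemma not_mem_starOff' {n : ℕ} {u : Fin n} {F : Finset (Fin n)}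
    {f : EdgeType n} (hvf : u ∉ f.1) : f ∉ starOff u F := by
  simp only [starOff, mem_filter, mem_univ, true_and, not_and]
  intro h
  exact absurd h hvf

lemma disjoint_starOff {n : ℕ} {u v : Fin n} {F : Finset (Fin n)} (hv : v ∈ F) (huv : v ≠ u) :
    Disjoint (starOff u F) (starOff v F) := by
  rw [disjoint_left]
  intro f hf hf'
  simp only [starOff, mem_filter, mem_univ, true_and] at hf hf'
  exact hf.2 v hv huv hf'.1

lemma good_of_both {n : ℕ} {k : ℕ} {σ : Ord n} {e : EdgeType n} {u v : Fin n} (hu : u ∈ e.1)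
    (hv : v ∈ e.1) (F : Finset (Fin n)) (h : Both k σ e) :
    Good k e (starOff u F) (starOff v F) (pos σ) := by
  have hs : ∀ w, #{x ∈ starOff w F | pos σ x < pos σ e} ≤ rk σ w e := by
    intro w
    apply card_le_card
    apply filter_subset_filter
    intro f hf
    simp only [starOff, star, mem_filter, mem_univ, true_and] at hf ⊢
    exact hf.1
  exact ⟨(hs u).trans_lt (h u hu), (hs v).trans_lt (h v hv)⟩

lemma both_iff_good {n : ℕ} {k : ℕ} {σ : Ord n} {u v : Fin n} (he : ¬ (s(u, v)).IsDiag) :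
    Both k σ ⟨s(u, v), he⟩ ↔
      Good k ⟨s(u, v), he⟩ (starOff u {u, v}) (starOff v {u, v}) (pos σ) := by
  have huv : u ≠ v := by simpa using he
  refine ⟨good_of_both (by simp) (by simp) _, fun h => ?_⟩
  have hs : ∀ w ∈ s(u, v), rk σ w ⟨s(u, v), he⟩
      ≤ #{x ∈ starOff w {u, v} | pos σ x < pos σ ⟨s(u, v), he⟩} := by
    intro w hw
    apply card_le_card
    intro f hf
    simp only [starOff, star, mem_filter, mem_univ, true_and] at hf ⊢
    refine ⟨⟨hf.1, ?_⟩, hf.2⟩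
    intro y hy hyw hyf
    have : f = ⟨s(u, v), he⟩ := by
      apply Subtype.ext
      have hy' : y ∈ s(u, v) := by simpa using hy
      exact ((Sym2.mem_and_mem_iff hyw).1 ⟨hyf, hf.1⟩).trans ((Sym2.mem_and_mem_iff hyw).1 ⟨hy', hw⟩).symm
    rw [this] at hf
    exact lt_irrefl _ hf.2
  intro w hw
  refine (hs w hw).trans_lt ?_
  rcases Sym2.mem_iff.1 hw with rfl | rfl
  · exact h.1
  · exact h.2

open scoped Classical in
lemma count_both {n : ℕ} (k : ℕ) (e : EdgeType n) :
    (#{σ : Ord n | Both k σ e} : ℝ) = prGood k (n - 2) * Fintype.card (Ord n) := by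
  obtain ⟨e, he⟩ := e
  induction e with
  | h u v =>
    have huv : u ≠ v := by simpa using he
    have hc : #({u, v} : Finset (Fin n)) = 2 := card_pair huv
    have h := indep (N := numEdges n) k (n - 2) (⟨s(u, v), he⟩ : EdgeType n)
      (starOff u {u, v}) (starOff v {u, v})
      (by rw [card_starOff _ _ (by simp), hc]) (by rw [card_starOff _ _ (by simp), hc])
      (disjoint_starOff (by simp) huv.symm)
      (not_mem_starOff (v := v) (by simp) huv.symm (by simp))
      (not_mem_starOff (v := u) (by simp) huv (by simp))
      (fun _ => True) (by simp)
    simp only [and_true, filter_true, card_univ] at h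
    have h2 : (#{σ : Ord n | Both k σ ⟨s(u, v), he⟩}) =
      #{σ : Ord n | Good k ⟨s(u, v), he⟩ (starOff u {u, v}) (starOff v {u, v})
        (fun x => (σ.symm x : ℕ))} := by
      congr 1
      ext σ
      simp only [mem_filter, mem_univ, true_and]
      exact both_iff_good he
    rw [h2]
    have h3 : ((2 * (n - 2) + 1)! : ℝ) ≠ 0 := by positivity
    rw [prGood, div_mul_eq_mul_div, eq_div_iff h3]
    exact_mod_cast h

lemma good_congr {α : Type*} {k : ℕ} {e : α} {A B : Finset α} {g g' : α → ℕ}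
    (he : g e = g' e) (hA : ∀ x ∈ A, g x = g' x) (hB : ∀ x ∈ B, g x = g' x) :
    Good k e A B g ↔ Good k e A B g' := by
  unfold Good
  rw [filter_congr (fun x hx => by rw [hA x hx, he]), filter_congr (s := B) (fun x hx => by rw [hB x hx, he])]

open scoped Classical in
lemma count_both_both {n : ℕ} (k : ℕ) (e f : EdgeType n) (hd : ∀ v ∈ e.1, v ∉ f.1) :
    (#{σ : Ord n | Both k σ e ∧ Both k σ f} : ℝ) ≤ prGood k (n - 4) ^ 2 * Fintype.card (Ord n) := by
  obtain ⟨e, he⟩ := e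
  obtain ⟨f, hf⟩ := f
  induction e with
  | h u v =>
  induction f with
  | h w x =>
    have huv : u ≠ v := by simpa using he
    have hwx : w ≠ x := by simpa using hf
    have hd1 := hd u (by simp)
    have hd2 := hd v (by simp)
    simp only [Sym2.mem_iff, not_or] at hd1 hd2
    obtain ⟨huw, hux⟩ := hd1
    obtain ⟨hvw, hvx⟩ := hd2
    set F : Finset (Fin n) := {u, v, w, x} with hF
    have hc : #F = 4 := by
      rw [hF, card_insert_of_notMem, card_insert_of_notMem, card_pair hwx] <;> simp [*]
    have mu : u ∈ F := by simp [hF]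
    have mv : v ∈ F := by simp [hF]
    have mw : w ∈ F := by simp [hF]
    have mx : x ∈ F := by simp [hF]
    set E : EdgeType n := ⟨s(u, v), he⟩ with hE
    set G : EdgeType n := ⟨s(w, x), hf⟩ with hG
    have h1 := indep (N := numEdges n) k (n - 4) G (starOff w F) (starOff x F)
      (by rw [card_starOff _ _ mw, hc]) (by rw [card_starOff _ _ mx, hc])
      (disjoint_starOff mx hwx.symm)
      (not_mem_starOff mx hwx.symm (by simp [hG]))
      (not_mem_starOff mw hwx (by simp [hG]))
      (fun _ => True) (by simp)
    simp only [and_true, filter_true, card_univ] at h1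
    have h2 := indep (N := numEdges n) k (n - 4) E (starOff u F) (starOff v F)
      (by rw [card_starOff _ _ mu, hc]) (by rw [card_starOff _ _ mv, hc])
      (disjoint_starOff mv huv.symm)
      (not_mem_starOff mv huv.symm (by simp [hE]))
      (not_mem_starOff mu huv (by simp [hE]))
      (fun σ => Good k G (starOff w F) (starOff x F) (fun y => (σ.symm y : ℕ))) (by
        intro σ π
        have hfix : ∀ y, y ∉ insert E (starOff u F ∪ starOff v F) →
            ((σ.trans (Equiv.Perm.ofSubtype π).symm).symm y : ℕ) = (σ.symm y : ℕ) := by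
          intro y hy
          have := Equiv.Perm.ofSubtype_apply_of_not_mem π hy
          rw [Equiv.symm_trans_apply, Equiv.symm_symm, this]
        apply good_congr
        · apply hfix
          simp only [mem_insert, mem_union, not_or]
          refine ⟨?_, not_mem_starOff' ?_, not_mem_starOff' ?_⟩
          · intro h
            have : u ∈ G.1 := by rw [h]; simp [hE]
            simp [hG, huw, hux] at this
          · simp [hG, huw, hux]
          · simp [hG, hvw, hvx]
        · intro y hy
          apply hfix
          simp only [mem_insert, mem_union, not_or]
          refine ⟨?_, ?_, ?_⟩
          · rintro rfl
            exact not_mem_starOff' (by simp [hE, Ne.symm huw, Ne.symm hvw]) hy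
          · exact disjoint_left.1 (disjoint_starOff mu huw) hy
          · exact disjoint_left.1 (disjoint_starOff mv hvw) hy
        · intro y hy
          apply hfix
          simp only [mem_insert, mem_union, not_or]
          refine ⟨?_, ?_, ?_⟩
          · rintro rfl
            exact not_mem_starOff' (by simp [hE, Ne.symm hux, Ne.symm hvx]) hy
          · exact disjoint_left.1 (disjoint_starOff mu hux) hy
          · exact disjoint_left.1 (disjoint_starOff mv hvx) hy)
    have h3 : (#{σ : Ord n | Both k σ E ∧ Both k σ G}) ≤
      #{σ : Ord n | Good k E (starOff u F) (starOff v F) (fun y => (σ.symm y : ℕ)) ∧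
        Good k G (starOff w F) (starOff x F) (fun y => (σ.symm y : ℕ))} := by
      apply card_le_card
      intro σ hσ
      simp only [mem_filter, mem_univ, true_and] at hσ ⊢
      exact ⟨good_of_both (by simp [hE]) (by simp [hE]) F hσ.1,
        good_of_both (by simp [hG]) (by simp [hG]) F hσ.2⟩
    have h4 : ((2 * (n - 4) + 1)! : ℝ) ≠ 0 := by positivity
    have h1' : (#{σ : Ord n | Good k G (starOff w F) (starOff x F) (fun y => (σ.symm y : ℕ))} : ℝ)
        = prGood k (n - 4) * Fintype.card (Ord n) := by
      rw [prGood, div_mul_eq_mul_div, eq_div_iff h4]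
      exact_mod_cast h1
    have h2' : (#{σ : Ord n | Good k E (starOff u F) (starOff v F) (fun y => (σ.symm y : ℕ)) ∧
        Good k G (starOff w F) (starOff x F) (fun y => (σ.symm y : ℕ))} : ℝ)
        = prGood k (n - 4) * #{σ : Ord n | Good k G (starOff w F) (starOff x F)
          (fun y => (σ.symm y : ℕ))} := by
      rw [prGood, div_mul_eq_mul_div, eq_div_iff h4]
      exact_mod_cast h2
    calc (#{σ : Ord n | Both k σ E ∧ Both k σ G} : ℝ)
        ≤ (#{σ : Ord n | Good k E (starOff u F) (starOff v F) (fun y => (σ.symm y : ℕ)) ∧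
        Good k G (starOff w F) (starOff x F) (fun y => (σ.symm y : ℕ))} : ℝ) := by exact_mod_cast h3
      _ = _ := by rw [h2', h1']; ring

lemma card_edgeType (n : ℕ) : Fintype.card (EdgeType n) = numEdges n := by
  rw [Sym2.card_subtype_not_diag, Fintype.card_fin, Nat.choose_two_right]
  rfl

lemma numEdges_cast (n : ℕ) (hn : 1 ≤ n) : (numEdges n : ℝ) = (n : ℝ) * (n - 1) / 2 := by
  have := Nat.cast_choose_two ℝ n
  rw [Nat.choose_two_right] at this
  exact this

lemma card_ord_pos (n : ℕ) : (0 : ℝ) < Fintype.card (Ord n) := by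
  have : Nonempty (Ord n) := ⟨(Fintype.equivFinOfCardEq (card_edgeType n)).symm⟩
  exact_mod_cast Fintype.card_pos

open scoped Classical in
lemma sum_yCount {n : ℕ} (k : ℕ) :
    ∑ σ : Ord n, (yCount k σ : ℝ) = numEdges n * prGood k (n - 2) * Fintype.card (Ord n) := by
  have h : ∑ σ : Ord n, yCount k σ = ∑ e : EdgeType n, #{σ : Ord n | Both k σ e} := by
    simp only [yCount, card_filter]
    rw [sum_comm]
  have h' : ∑ σ : Ord n, (yCount k σ : ℝ) = ∑ e : EdgeType n, (#{σ : Ord n | Both k σ e} : ℝ) := by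
    exact_mod_cast h
  rw [h', sum_congr rfl (fun e _ => count_both k e), sum_const, card_univ, card_edgeType,
    nsmul_eq_mul, mul_assoc]

open scoped Classical in
lemma card_meeting {n : ℕ} (k : ℕ) (σ : Ord n) :
    #{p : EdgeType n × EdgeType n | (Both k σ p.1 ∧ Both k σ p.2) ∧ ¬ (∀ v ∈ p.1.1, v ∉ p.2.1)}
      ≤ n * k ^ 2 := by
  calc _ ≤ #((univ : Finset (Fin n)).biUnion (fun v =>
        ({e ∈ star v | rk σ v e < k} : Finset (EdgeType n)) ×ˢ
        ({e ∈ star v | rk σ v e < k} : Finset (EdgeType n)))) := by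
        apply card_le_card
        intro p hp
        simp only [mem_filter, mem_univ, true_and, not_forall, not_not] at hp
        obtain ⟨⟨h1, h2⟩, v, hv1, hv2⟩ := hp
        simp only [mem_biUnion, mem_univ, true_and, mem_product, mem_filter, mem_star]
        exact ⟨v, ⟨hv1, h1 v hv1⟩, hv2, h2 v hv2⟩
    _ ≤ ∑ v : Fin n, #(({e ∈ star v | rk σ v e < k} : Finset (EdgeType n)) ×ˢ
        ({e ∈ star v | rk σ v e < k} : Finset (EdgeType n))) := card_biUnion_le
    _ ≤ ∑ v : Fin n, k ^ 2 := by
        apply sum_le_sum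
        intro v _
        rw [card_product, card_rk_lt, pow_two]
        exact Nat.mul_le_mul (min_le_left _ _) (min_le_left _ _)
    _ = n * k ^ 2 := by simp

open scoped Classical in
lemma sum_yCount_sq {n : ℕ} (k : ℕ) :
    ∑ σ : Ord n, (yCount k σ : ℝ) ^ 2
      ≤ (n * k ^ 2 + (numEdges n * prGood k (n - 4)) ^ 2) * Fintype.card (Ord n) := by
  have h1 : ∀ σ : Ord n, yCount k σ ^ 2 ≤
      #{p : EdgeType n × EdgeType n | (Both k σ p.1 ∧ Both k σ p.2) ∧ (∀ v ∈ p.1.1, v ∉ p.2.1)}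
      + n * k ^ 2 := by
    intro σ
    have h : yCount k σ ^ 2 = #{p : EdgeType n × EdgeType n | Both k σ p.1 ∧ Both k σ p.2} := by
      rw [pow_two, yCount, ← card_product]
      congr 1
      ext p
      simp
    rw [h, ← card_filter_add_card_filter_not (fun p : EdgeType n × EdgeType n => ∀ v ∈ p.1.1, v ∉ p.2.1),
      filter_filter, filter_filter]
    exact Nat.add_le_add_left (card_meeting k σ) _
  have h2 : ∑ σ : Ord n,
      #{p : EdgeType n × EdgeType n | (Both k σ p.1 ∧ Both k σ p.2) ∧ (∀ v ∈ p.1.1, v ∉ p.2.1)}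
      = ∑ p : EdgeType n × EdgeType n,
        #{σ : Ord n | (Both k σ p.1 ∧ Both k σ p.2) ∧ (∀ v ∈ p.1.1, v ∉ p.2.1)} := by
    simp only [card_filter]
    rw [sum_comm]
  have h3 : ∀ p : EdgeType n × EdgeType n,
      (#{σ : Ord n | (Both k σ p.1 ∧ Both k σ p.2) ∧ (∀ v ∈ p.1.1, v ∉ p.2.1)} : ℝ)
      ≤ prGood k (n - 4) ^ 2 * Fintype.card (Ord n) := by
    intro p
    by_cases hp : ∀ v ∈ p.1.1, v ∉ p.2.1
    · have := count_both_both k p.1 p.2 hp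
      refine le_trans ?_ this
      apply Nat.cast_le.2
      apply card_le_card
      intro σ hσ
      simp only [mem_filter, mem_univ, true_and] at hσ ⊢
      exact hσ.1
    · simp only [hp, and_false, filter_false, card_empty, Nat.cast_zero]
      positivity
  calc ∑ σ : Ord n, (yCount k σ : ℝ) ^ 2
      ≤ ∑ σ : Ord n, ((#{p : EdgeType n × EdgeType n | (Both k σ p.1 ∧ Both k σ p.2) ∧
        (∀ v ∈ p.1.1, v ∉ p.2.1)} : ℝ) + n * k ^ 2) := by
        apply sum_le_sum
        intro σ _
        exact_mod_cast h1 σ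
    _ = ∑ p : EdgeType n × EdgeType n,
        (#{σ : Ord n | (Both k σ p.1 ∧ Both k σ p.2) ∧ (∀ v ∈ p.1.1, v ∉ p.2.1)} : ℝ)
        + Fintype.card (Ord n) * (n * k ^ 2) := by
        rw [sum_add_distrib, sum_const, card_univ, nsmul_eq_mul]
        congr 1
        exact_mod_cast h2
    _ ≤ ∑ p : EdgeType n × EdgeType n, prGood k (n - 4) ^ 2 * Fintype.card (Ord n)
        + Fintype.card (Ord n) * (n * k ^ 2) := by
        gcongr with p _
        exact h3 p
    _ = _ := by
        rw [sum_const, card_univ, Fintype.card_prod, card_edgeType, nsmul_eq_mul]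
        push_cast
        ring

lemma pr_le_one {n : ℕ} (p : Ord n → Prop) : Pr p ≤ 1 := by
  unfold Pr
  rw [div_le_one (card_ord_pos n)]
  exact_mod_cast card_le_univ _

lemma pr_ge {n : ℕ} (k : ℕ) (hkn : k < n) (η : ℝ) (hη : 0 < η) :
    1 - (((k : ℝ) ^ 2 / n + ((n : ℝ) * (n - 1) / 2 * prGood k (n - 4) / n) ^ 2
      - 2 * (sConst k / 4) * ((n : ℝ) * (n - 1) / 2 * prGood k (n - 2) / n)
      + (sConst k / 4) ^ 2) / η ^ 2)
    ≤ Pr (fun σ : Ord n => |((nearestNbr k σ).card : ℝ) - oConst k * n| ≤ η * n) := by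
  classical
  have hn : (0 : ℝ) < n := by
    have : 0 < n := by omega
    exact_mod_cast this
  set c := sConst k / 4 with hc
  have hM := card_ord_pos n
  set M : ℝ := ((Fintype.card (Ord n) : ℕ) : ℝ) with hMdef
  have hX : ∀ σ : Ord n, ((nearestNbr k σ).card : ℝ) - oConst k * n = -((yCount k σ : ℝ) - c * n) := by
    intro σ
    have h : ((nearestNbr k σ).card : ℝ) + yCount k σ = k * n := by
      exact_mod_cast nearestNbr_add_yCount k hkn σ
    rw [hc, sConst_eq]
    linear_combination h
  have hfun : (fun σ : Ord n => |((nearestNbr k σ).card : ℝ) - oConst k * n| ≤ η * n)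
      = fun σ : Ord n => |(yCount k σ : ℝ) - c * n| ≤ η * n := by
    funext σ
    rw [hX, abs_neg]
  rw [hfun]
  unfold Pr
  rw [← hMdef]
  have hsplit := card_filter_add_card_filter_not (s := (univ : Finset (Ord n)))
    (fun σ : Ord n => |(yCount k σ : ℝ) - c * n| ≤ η * n)
  have hsplit' : (#{σ : Ord n | |(yCount k σ : ℝ) - c * n| ≤ η * n} : ℝ)
      = M - #{σ : Ord n | ¬ |(yCount k σ : ℝ) - c * n| ≤ η * n} := by
    rw [hMdef, ← card_univ, ← hsplit]; push_cast; ring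
  have hbad : (#{σ : Ord n | ¬ |(yCount k σ : ℝ) - c * n| ≤ η * n} : ℝ) * (η * n) ^ 2
      ≤ ∑ σ : Ord n, ((yCount k σ : ℝ) - c * n) ^ 2 := by
    rw [← nsmul_eq_mul, ← sum_const]
    refine le_trans (sum_le_sum (fun σ hσ => ?_))
      (sum_le_sum_of_subset_of_nonneg (subset_univ _) (fun _ _ _ => sq_nonneg _))
    simp only [mem_filter, mem_univ, true_and, not_le] at hσ
    rw [← sq_abs ((yCount k σ : ℝ) - c * n)]
    have : 0 < η * n := by positivity
    gcongr
  have hexp : ∑ σ : Ord n, ((yCount k σ : ℝ) - c * n) ^ 2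
      = ∑ σ : Ord n, (yCount k σ : ℝ) ^ 2 - 2 * c * n * ∑ σ : Ord n, (yCount k σ : ℝ)
        + M * (c * n) ^ 2 := by
    have : ∀ σ : Ord n, ((yCount k σ : ℝ) - c * n) ^ 2
        = (yCount k σ : ℝ) ^ 2 - 2 * c * n * (yCount k σ : ℝ) + (c * n) ^ 2 := fun σ => by ring
    simp only [this, sum_add_distrib, sum_sub_distrib, ← mul_sum, sum_const, card_univ,
      nsmul_eq_mul]
    rfl
  have h2 := sum_yCount_sq (n := n) k
  rw [hexp, sum_yCount, ← hMdef] at hbad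
  rw [← hMdef] at h2
  rw [numEdges_cast n (by omega)] at hbad h2
  rw [hsplit', le_div_iff₀ hM, sub_mul, one_mul]
  apply sub_le_sub_left
  rw [← mul_le_mul_iff_left₀ (show (0 : ℝ) < (η * n) ^ 2 by positivity)]
  refine hbad.trans ?_
  have hfin : ((k : ℝ) ^ 2 / n + ((n : ℝ) * (n - 1) / 2 * prGood k (n - 4) / n) ^ 2
      - 2 * c * ((n : ℝ) * (n - 1) / 2 * prGood k (n - 2) / n)
      + c ^ 2) / η ^ 2 * M * (η * n) ^ 2
      = (n * k ^ 2 + ((n : ℝ) * (n - 1) / 2 * prGood k (n - 4)) ^ 2) * M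
        - 2 * c * n * ((n : ℝ) * (n - 1) / 2 * prGood k (n - 2) * M) + M * (c * n) ^ 2 := by
    field_simp
  rw [hfin]
  linarith

/-- For every fixed `k ≥ 1`, with high probability the number of edges
of `O_k` equals `(o_k + o(1))·n`. -/
theorem nearestNbr_card_edges (k : ℕ) (hk : 1 ≤ k) :
    ∀ η : ℝ, 0 < η →
      Filter.Tendsto
        (fun n : ℕ => Pr (fun σ : Ord n =>
          |((nearestNbr k σ).card : ℝ) - oConst k * n| ≤ η * n))
        Filter.atTop (nhds 1) := by
  intro η hη
  have h2 := tendsto_numEdges_prGood k 2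
  have h4 := tendsto_numEdges_prGood k 4
  have h0 : Tendsto (fun n : ℕ => (k : ℝ) ^ 2 / n) atTop (nhds 0) :=
    tendsto_const_div_atTop_nhds_zero_nat _
  have hlim := (((((h0.add (h4.pow 2)).sub (h2.const_mul (2 * (sConst k / 4)))).add
    (tendsto_const_nhds (x := (sConst k / 4) ^ 2))).div_const (η ^ 2)).const_sub 1)
  have e : 1 - (0 + (sConst k / 4) ^ 2 - 2 * (sConst k / 4) * (sConst k / 4)
      + (sConst k / 4) ^ 2) / η ^ 2 = 1 := by ring
  rw [e] at hlim
  refine tendsto_of_tendsto_of_tendsto_of_le_of_le' hlim tendsto_const_nhds ?_ ?_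
  · filter_upwards [eventually_gt_atTop k] with n hn
    exact pr_ge k hn η hη
  · exact Eventually.of_forall (fun n => pr_le_one _)

end RGP
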